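/- For every ℓ ∈ ℕ and Δ ∈ {≤, =}, the family of languages generated by CD grammar systems with arbitrarily many context-free components all working in the (t∧Δℓ)-mode is independent of ℓ and characterizes the programmed languages of finite index with appearance checking: L(CD_∞, CF[−λ], (t∧Δℓ)) = L(CD_∞, CF[−λ], (t∧Δ1)) = ⋃_{k∈ℕ} L(CD_∞, CF[−λ], (t∧Δk)) = L_fin(P, CF[−λ], ac), both with and without erasing rules. -/

import Mathlib

namespace CDHybrid

/-- Symbols: nonterminals are natural numbers, terminals come from `T`. -/
abbrev Symb (T : Type) := ℕ ⊕ T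

/-- Sentential forms. -/
abbrev SForm (T : Type) := List (Symb T)

/-- A context-free rule `A → z`. -/
abbrev Rule (T : Type) := ℕ × SForm T

/-- Number of nonterminal occurrences in a sentential form. -/
def ntCount {T : Type} (x : SForm T) : ℕ := (x.filter Sum.isLeft).length

/-- One rewriting step using some rule of the rule set `P`. -/
def RStep {T : Type} (P : List (Rule T)) (x y : SForm T) : Prop :=
  ∃ r ∈ P, ∃ u v : SForm T, x = u ++ Sum.inl r.1 :: v ∧ y = u ++ r.2 ++ v

/-- `m`-step derivation using only rules of `P`. -/
def StepsN {T : Type} (P : List (Rule T)) : ℕ → SForm T → SForm T → Prop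
  | 0, x, y => x = y
  | m + 1, x, y => ∃ z, RStep P x z ∧ StepsN P m z y

/-- `m`-step derivation using only rules of `P`, all intermediate (and the final)
sentential forms having at most `b` occurrences of nonterminals. -/
def StepsNB {T : Type} (P : List (Rule T)) (b : ℕ) : ℕ → SForm T → SForm T → Prop
  | 0, x, y => x = y
  | m + 1, x, y => ∃ z, RStep P x z ∧ ntCount z ≤ b ∧ StepsNB P b m z y

/-- Derivation modes of CD grammar systems. -/
inductive Mode where
  | eq : ℕ → Mode
  | le : ℕ → Mode
  | ge : ℕ → Mode
  | star : Mode
  | t : Mode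
  | conj : Mode → Mode → Mode

/-- The predicate of a derivation mode: `modeOK P f m y` holds if an `m`-step
derivation by the component `P` ending in `y` is acceptable for mode `f`. -/
def modeOK {T : Type} (P : List (Rule T)) : Mode → ℕ → SForm T → Prop
  | .eq k, m, _ => m = k
  | .le k, m, _ => m ≤ k
  | .ge k, m, _ => k ≤ m
  | .star, _, _ => True
  | .t, _, y => ¬ ∃ z, RStep P y z
  | .conj f g, m, y => modeOK P f m y ∧ modeOK P g m y

/-- A CD grammar system with context-free components. -/
structure CDGS (T : Type) where
  deg : ℕ
  start : ℕ
  comp : Fin deg → List (Rule T)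

/-- λ-freeness: no erasing rules. -/
def CDGS.LamFree {T : Type} (G : CDGS T) : Prop :=
  ∀ i : Fin G.deg, ∀ r ∈ G.comp i, r.2 ≠ []

/-- One derivation step of a component of `G` in mode `f`. -/
def CDGS.ModeStep {T : Type} (G : CDGS T) (f : Mode) (x y : SForm T) : Prop :=
  ∃ i : Fin G.deg, ∃ m : ℕ, StepsN (G.comp i) m x y ∧ modeOK (G.comp i) f m y

/-- One derivation step of a component of `G` in mode `f`, with all produced
sentential forms having at most `b` nonterminal occurrences. -/
def CDGS.ModeStepB {T : Type} (G : CDGS T) (f : Mode) (b : ℕ) (x y : SForm T) : Prop :=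
  ∃ i : Fin G.deg, ∃ m : ℕ, StepsNB (G.comp i) b m x y ∧ modeOK (G.comp i) f m y

/-- The language generated by `G` in mode `f`. -/
def CDGS.lang {T : Type} (G : CDGS T) (f : Mode) : Set (List T) :=
  { w | Relation.TransGen (G.ModeStep f) [Sum.inl G.start] (w.map Sum.inr) }

/-- The words of the language of `G` in mode `f` possessing a derivation of index
at most `b`, i.e., all sentential forms occurring in it have at most `b`
nonterminal occurrences. -/
def CDGS.langB {T : Type} (G : CDGS T) (f : Mode) (b : ℕ) : Set (List T) :=
  { w | ntCount ([Sum.inl G.start] : SForm T) ≤ b ∧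
      Relation.TransGen (G.ModeStepB f b) [Sum.inl G.start] (w.map Sum.inr) }

/-- Two languages are considered equal iff they differ at most in the empty word. -/
def EqL {T : Type} (L₁ L₂ : Set (List T)) : Prop := L₁ \ {[]} = L₂ \ {[]}

/-- The family `L(CD_n, CF[−λ], f)`; `lf = true` forbids erasing rules. -/
def CDFam (T : Type) (lf : Bool) (n : ℕ) (f : Mode) : Set (Set (List T)) :=
  { L | ∃ G : CDGS T, G.deg ≤ n ∧ (lf = true → G.LamFree) ∧ EqL (G.lang f) L }

/-- The family `L(CD_∞, CF[−λ], f)`. -/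
def CDFamInf (T : Type) (lf : Bool) (f : Mode) : Set (Set (List T)) :=
  { L | ∃ G : CDGS T, (lf = true → G.LamFree) ∧ EqL (G.lang f) L }

/-- The family `L_m(CD_n, CF[−λ], f)` of such languages of index at most `m`. -/
def CDFamInd (T : Type) (lf : Bool) (n : ℕ) (f : Mode) (m : ℕ) : Set (Set (List T)) :=
  { L | ∃ G : CDGS T, G.deg ≤ n ∧ (lf = true → G.LamFree) ∧ EqL (G.lang f) L ∧
      G.lang f ⊆ G.langB f m }

/-- The family `L_m(CD_∞, CF[−λ], f)`. -/
def CDFamIndInf (T : Type) (lf : Bool) (f : Mode) (m : ℕ) : Set (Set (List T)) :=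
  { L | ∃ G : CDGS T, (lf = true → G.LamFree) ∧ EqL (G.lang f) L ∧ G.lang f ⊆ G.langB f m }

/-- The family `L_fin(CD_∞, CF[−λ], f)`. -/
def CDFamFinInf (T : Type) (lf : Bool) (f : Mode) : Set (Set (List T)) :=
  { L | ∃ m : ℕ, 1 ≤ m ∧ L ∈ CDFamIndInf T lf f m }

/-- A context-free grammar. -/
structure CFG (T : Type) where
  start : ℕ
  rules : List (Rule T)

/-- The language generated by a context-free grammar. -/
def CFG.lang {T : Type} (G : CFG T) : Set (List T) :=
  { w | Relation.ReflTransGen (RStep G.rules) [Sum.inl G.start] (w.map Sum.inr) }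

/-- The words of `G.lang` having a derivation of index at most `m`. -/
def CFG.langB {T : Type} (G : CFG T) (m : ℕ) : Set (List T) :=
  { w | ntCount ([Sum.inl G.start] : SForm T) ≤ m ∧
      Relation.ReflTransGen (fun x y => RStep G.rules x y ∧ ntCount y ≤ m)
        [Sum.inl G.start] (w.map Sum.inr) }

/-- The family `L(CF)` of context-free languages. -/
def CFFam (T : Type) : Set (Set (List T)) := { L | ∃ G : CFG T, EqL G.lang L }

/-- The family `L_m(CF)` of context-free languages of index at most `m`. -/
def CFFamInd (T : Type) (m : ℕ) : Set (Set (List T)) :=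
  { L | ∃ G : CFG T, EqL G.lang L ∧ G.lang ⊆ G.langB m }

/-- The family `L_fin(CF)` of context-free languages of finite index. -/
def CFFamFin (T : Type) : Set (Set (List T)) :=
  { L | ∃ m : ℕ, 1 ≤ m ∧ L ∈ CFFamInd T m }

/-- A grammar is linear if every right-hand side contains at most one nonterminal. -/
def CFG.Linear {T : Type} (G : CFG T) : Prop := ∀ r ∈ G.rules, ntCount r.2 ≤ 1

/-- The family `L(LIN)` of linear context-free languages. -/
def LinFam (T : Type) : Set (Set (List T)) :=
  { L | ∃ G : CFG T, G.Linear ∧ EqL G.lang L }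

/-- The family `L(FIN)` of finite languages. -/
def FinFam (T : Type) : Set (Set (List T)) := { L | L.Finite }

/-- A programmed grammar with context-free rules. -/
structure PG (T : Type) where
  start : ℕ
  nLab : ℕ
  rule : Fin nLab → Rule T
  succ : Fin nLab → Set (Fin nLab)
  fail : Fin nLab → Set (Fin nLab)

def PG.LamFree {T : Type} (G : PG T) : Prop := ∀ r : Fin G.nLab, (G.rule r).2 ≠ []

/-- No appearance checking: all failure fields are empty. -/
def PG.NoAC {T : Type} (G : PG T) : Prop := ∀ r : Fin G.nLab, G.fail r = ∅

/-- One step of a programmed grammar on pairs (sentential form, label). -/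
def PG.PStep {T : Type} (G : PG T) (p q : SForm T × Fin G.nLab) : Prop :=
  (∃ u v : SForm T, p.1 = u ++ Sum.inl (G.rule p.2).1 :: v ∧
      q.1 = u ++ (G.rule p.2).2 ++ v ∧ q.2 ∈ G.succ p.2) ∨
  (Sum.inl (G.rule p.2).1 ∉ p.1 ∧ q.1 = p.1 ∧ q.2 ∈ G.fail p.2)

/-- The language generated by a programmed grammar. -/
def PG.lang {T : Type} (G : PG T) : Set (List T) :=
  { w | ∃ r₁ r₂ : Fin G.nLab,
      Relation.ReflTransGen G.PStep ([Sum.inl G.start], r₁) (w.map Sum.inr, r₂) }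

/-- The words of `G.lang` having a derivation of index at most `m`. -/
def PG.langB {T : Type} (G : PG T) (m : ℕ) : Set (List T) :=
  { w | ∃ r₁ r₂ : Fin G.nLab, ntCount ([Sum.inl G.start] : SForm T) ≤ m ∧
      Relation.ReflTransGen (fun p q => G.PStep p q ∧ ntCount q.1 ≤ m)
        ([Sum.inl G.start], r₁) (w.map Sum.inr, r₂) }

/-- The family `L_m(P, CF[−λ][, ac])`: programmed languages of index at most `m`;
`ac = false` forbids appearance checking, `lf = true` forbids erasing rules. -/
def PFamInd (T : Type) (lf ac : Bool) (m : ℕ) : Set (Set (List T)) :=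
  { L | ∃ G : PG T, (lf = true → G.LamFree) ∧ (ac = false → G.NoAC) ∧
      EqL G.lang L ∧ G.lang ⊆ G.langB m }

/-- The family `L_fin(P, CF[−λ][, ac])` of programmed languages of finite index. -/
def PFamFin (T : Type) (lf ac : Bool) : Set (Set (List T)) :=
  { L | ∃ m : ℕ, 1 ≤ m ∧ L ∈ PFamInd T lf ac m }


/-! ### Basic facts -/

/-- The multiset of nonterminals of a form. -/
def nts {N T : Type} (x : List (N ⊕ T)) : Multiset N := (x.filterMap Sum.getLeft? : List N)

section basic
variable {N T : Type}

@[simp] lemma nts_nil : nts ([] : List (N ⊕ T)) = 0 := rfl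
@[simp] lemma nts_cons_inl (A : N) (x : List (N ⊕ T)) : nts (Sum.inl A :: x) = A ::ₘ nts x := rfl
@[simp] lemma nts_cons_inr (a : T) (x : List (N ⊕ T)) : nts (Sum.inr a :: x) = nts x := rfl
@[simp] lemma nts_append (x y : List (N ⊕ T)) : nts (x ++ y) = nts x + nts y := by
  simp [nts, List.filterMap_append]
lemma mem_nts {A : N} {x : List (N ⊕ T)} : A ∈ nts x ↔ Sum.inl A ∈ x := by
  induction x with
  | nil => simp
  | cons s x ih => cases s <;> simp [ih]
@[simp] lemma nts_map_inr (w : List T) : nts (w.map (Sum.inr : T → N ⊕ T)) = 0 := by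
  induction w with
  | nil => simp
  | cons s x ih => simpa using ih
lemma ntCount_eq (x : SForm T) : ntCount x = (nts x).card := by
  induction x with
  | nil => rfl
  | cons s x ih =>
    unfold ntCount at ih ⊢
    cases s with
    | inl A =>
      rw [List.filter_cons_of_pos (by rfl), List.length_cons, ih]; simp
    | inr a =>
      rw [List.filter_cons_of_neg (by simp), ih]; simp
lemma nts_map {M : Type} (g : N → M) (x : List (N ⊕ T)) :
    nts (x.map (Sum.map g id)) = (nts x).map g := by
  induction x with
  | nil => simp
  | cons s x ih => cases s <;> simp [ih]
lemma nts_eq_zero {x : List (N ⊕ T)} (h : nts x = 0) : ∃ w : List T, x = w.map Sum.inr := by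
  induction x with
  | nil => exact ⟨[], rfl⟩
  | cons s x ih =>
    cases s with
    | inl A => simp at h
    | inr a => obtain ⟨w, rfl⟩ := ih (by simpa using h); exact ⟨a :: w, rfl⟩
lemma exists_split {A : N} {x : List (N ⊕ T)} (h : A ∈ nts x) :
    ∃ u v, x = u ++ Sum.inl A :: v := List.append_of_mem (mem_nts.1 h)

lemma rstep_nts {P : List (Rule T)} {x y : SForm T} (h : RStep P x y) :
    ∃ r ∈ P, r.1 ∈ nts x ∧ nts y + {r.1} = nts x + nts r.2 := by
  obtain ⟨r, hr, u, v, rfl, rfl⟩ := h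
  refine ⟨r, hr, by simp, ?_⟩
  simp only [nts_append, nts_cons_inl, ← Multiset.singleton_add]
  abel

lemma stuck_iff {P : List (Rule T)} {y : SForm T} :
    (¬ ∃ z, RStep P y z) ↔ ∀ r ∈ P, r.1 ∉ nts y := by
  constructor
  · intro h r hr hm
    obtain ⟨u, v, rfl⟩ := exists_split hm
    exact h ⟨_, r, hr, u, v, rfl, rfl⟩
  · rintro h ⟨z, hz⟩
    obtain ⟨r, hr, hm, -⟩ := rstep_nts hz
    exact h r hr hm

open Classical in
lemma steps_count {P : List (Rule T)} {m : ℕ} {z y : SForm T} (h : StepsN P m z y) (A : ℕ) :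
    (nts z).count A ≤ (nts y).count A + if (∃ r ∈ P, r.1 = A) then m else 0 := by
  induction m generalizing z with
  | zero => cases h; simp
  | succ m ih =>
    obtain ⟨z', h1, h2⟩ := h
    have := ih h2
    obtain ⟨r, hr, hm, he⟩ := rstep_nts h1
    have he := congrArg (Multiset.count A) he
    simp only [Multiset.count_add, Multiset.count_singleton] at he
    by_cases hA : A = r.1
    · have hex : ∃ r ∈ P, r.1 = A := ⟨r, hr, hA.symm⟩
      rw [if_pos hex] at this ⊢
      rw [if_pos hA] at he
      omega
    · simp only [hA, if_false] at he
      split_ifs at * <;> omega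

lemma bound_steps {P : List (Rule T)} {m k : ℕ} {z y : SForm T} {dom : Finset ℕ} (hm : m ≤ k)
    (hs : StepsN P m z y) (ht : ∀ r ∈ P, r.1 ∉ nts y) (hP : ∀ r ∈ P, r.1 ∈ dom)
    (hy : nts y ≤ k • dom.val) : nts z ≤ k • dom.val := by
  classical
  rw [Multiset.le_iff_count] at hy ⊢
  intro A
  have h1 := steps_count hs A
  by_cases hA : ∃ r ∈ P, r.1 = A
  · rw [if_pos hA] at h1
    obtain ⟨r, hr, rfl⟩ := hA
    rw [Multiset.count_eq_zero.2 (ht r hr)] at h1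
    have : Multiset.count r.1 dom.val = 1 := Multiset.count_eq_one_of_mem dom.nodup (hP r hr)
    rw [Multiset.count_nsmul, this]
    omega
  · rw [if_neg hA] at h1
    exact le_trans h1 (hy A)

end basic

/-! ### From CD grammar systems to programmed grammars -/

section partA
variable {T : Type}

abbrev LabA (G : CDGS T) (k : ℕ) (M0 : Multiset ℕ) : Type :=
  Option (Fin G.deg × Fin k × {r : Rule T // ∃ i, r ∈ G.comp i} × {c : Multiset ℕ // c ≤ M0})

def ruleA (G : CDGS T) {k : ℕ} {M0 : Multiset ℕ} (S' : ℕ) : LabA G k M0 → Rule T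
  | none => (S', [Sum.inl G.start])
  | some (_, _, r, _) => r.1

def doneA (G : CDGS T) (D : ℕ → Prop) (i : Fin G.deg) (j : ℕ) (c : Multiset ℕ) : Prop :=
  D j ∧ ∀ r ∈ G.comp i, r.1 ∉ c

def succA (G : CDGS T) (D : ℕ → Prop) {k : ℕ} {M0 : Multiset ℕ} :
    LabA G k M0 → LabA G k M0 → Prop
  | _, none => False
  | none, some (i, j, r, c) => j.1 = 0 ∧ r.1 ∈ G.comp i ∧ c.1 = {G.start}
  | some (i, j, r, c), some (i', j', r', c') =>
      c'.1 + {r.1.1} = c.1 + nts r.1.2 ∧ r'.1 ∈ G.comp i' ∧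
      ((i' = i ∧ j'.1 = j.1 + 1) ∨ (doneA G D i (j.1 + 1) c'.1 ∧ j'.1 = 0)) ∧
      (c'.1 = 0 → doneA G D i (j.1 + 1) c'.1)

def pgA (G : CDGS T) (D : ℕ → Prop) {k : ℕ} {M0 : Multiset ℕ} (S' n : ℕ)
    (e : LabA G k M0 ≃ Fin n) : PG T where
  start := S'
  nLab := n
  rule a := ruleA G S' (e.symm a)
  succ a := {b | succA G D (e.symm a) (e.symm b)}
  fail _ := ∅

lemma pgA_step (G : CDGS T) (D : ℕ → Prop) {k : ℕ} {M0 : Multiset ℕ} (S' n : ℕ)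
    (e : LabA G k M0 ≃ Fin n) (x y : SForm T) (a b : Fin n) :
    (pgA G D S' n e).PStep (x, a) (y, b) ↔
      ∃ u v, x = u ++ Sum.inl (ruleA G S' (e.symm a)).1 :: v ∧
        y = u ++ (ruleA G S' (e.symm a)).2 ++ v ∧ succA G D (e.symm a) (e.symm b) := by
  constructor
  · rintro (⟨u, v, hx, hy, hs⟩ | ⟨_, _, hs⟩)
    · exact ⟨u, v, hx, hy, hs⟩
    · exact hs.elim
  · rintro ⟨u, v, hx, hy, hs⟩
    exact Or.inl ⟨u, v, hx, hy, hs⟩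

lemma finite_LabA (G : CDGS T) (k : ℕ) (M0 : Multiset ℕ) : Finite (LabA G k M0) := by
  classical
  have h1 : Finite {r : Rule T // ∃ i, r ∈ G.comp i} := by
    have : {r : Rule T | ∃ i, r ∈ G.comp i} = ⋃ i, {r | r ∈ G.comp i} := by ext; simp
    have h : {r : Rule T | ∃ i, r ∈ G.comp i}.Finite := by
      rw [this]; exact Set.finite_iUnion (fun i => List.finite_toSet _)
    exact h
  have h2 : Finite {c : Multiset ℕ // c ≤ M0} := (Set.finite_Iic M0)
  infer_instance

def InvA (G : CDGS T) (f : Mode) {k : ℕ} {M0 : Multiset ℕ} (S' : ℕ) (x : SForm T) :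
    LabA G k M0 → Prop
  | none => x = [Sum.inl S']
  | some (i, j, r, c) => x = [Sum.inl S'] ∨ (nts x = c.1 ∧ r.1 ∈ G.comp i ∧
      (∃ x0, Relation.ReflTransGen (G.ModeStep f) [Sum.inl G.start] x0 ∧
        StepsN (G.comp i) j.1 x0 x) ∧
      (c.1 = 0 → Relation.TransGen (G.ModeStep f) [Sum.inl G.start] x))

lemma stepsN_succ {P : List (Rule T)} {m : ℕ} {x y z : SForm T} (h : StepsN P m x y)
    (h2 : RStep P y z) : StepsN P (m + 1) x z := by
  induction m generalizing x with
  | zero => cases h; exact ⟨z, h2, rfl⟩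
  | succ m ih =>
    obtain ⟨a, h1, h3⟩ := h
    exact ⟨a, h1, ih h3⟩

lemma invA_step (G : CDGS T) (f : Mode) (D : ℕ → Prop)
    (hf : ∀ P m (y : SForm T), modeOK P f m y ↔ (¬ ∃ z, RStep P y z) ∧ D m)
    {k : ℕ} {M0 : Multiset ℕ} (S' n : ℕ) (hS : ∀ i, ∀ r ∈ G.comp i, r.1 ≠ S')
    (e : LabA G k M0 ≃ Fin n) (p q : SForm T × Fin n)
    (h : (pgA G D S' n e).PStep p q) (hI : InvA G f S' p.1 (e.symm p.2)) :
    InvA G f S' q.1 (e.symm q.2) := by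
  obtain ⟨x, a⟩ := p
  obtain ⟨y, b⟩ := q
  obtain ⟨u, v, hx, hy, hs⟩ := (pgA_step G D S' n e x y a b).1 h
  clear h
  change InvA G f S' x (e.symm a) at hI
  change InvA G f S' y (e.symm b)
  generalize e.symm a = la at *
  generalize e.symm b = lb at *
  rcases lb with _ | ⟨i', j', r', c'⟩
  · cases la <;> exact absurd hs (by simp [succA])
  rcases la with _ | ⟨i, j, r, c⟩
  · simp only [InvA] at hI
    subst hI
    obtain ⟨h1, h2, h3⟩ := hs
    simp only [ruleA] at hx hy
    have hu : u = [] ∧ v = [] := by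
      have := congrArg List.length hx
      simp at this
      constructor <;> apply List.eq_nil_of_length_eq_zero <;> omega
    obtain ⟨rfl, rfl⟩ := hu
    simp at hy
    subst hy
    refine Or.inr ⟨by simp [h3], h2, ⟨_, .refl, ?_⟩, ?_⟩
    · rw [h1]; rfl
    · intro h; simp [h3] at h
  · obtain ⟨h1, h2, h3, h4⟩ := hs
    simp only [ruleA] at hx hy
    rcases hI with hI | ⟨g1, g2, ⟨x0, g3, g4⟩, g5⟩
    · exfalso
      rw [hI] at hx
      have : Sum.inl r.1.1 ∈ ([Sum.inl S'] : SForm T) := by rw [hx]; simp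
      simp at this
      obtain ⟨i0, hi0⟩ := r.2
      exact hS i0 _ hi0 this
    have hstep : RStep (G.comp i) x y := ⟨r.1, g2, u, v, hx, hy⟩
    have hn : nts y = c'.1 := by
      have : nts y + {r.1.1} = c.1 + nts r.1.2 := by
        rw [← g1, hx, hy]
        simp only [nts_append, nts_cons_inl, ← Multiset.singleton_add]
        abel
      rw [← h1] at this
      exact add_right_cancel this
    have hst := stepsN_succ g4 hstep
    have hdone : doneA G D i (j.1 + 1) c'.1 →
        Relation.TransGen (G.ModeStep f) [Sum.inl G.start] y := by
      rintro ⟨d1, d2⟩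
      refine Relation.TransGen.tail' g3 ⟨i, j.1 + 1, hst, ?_⟩
      rw [hf, stuck_iff, hn]
      exact ⟨d2, d1⟩
    refine Or.inr ⟨hn, h2, ?_, fun h => hdone (h4 h)⟩
    rcases h3 with ⟨rfl, h3⟩ | ⟨h3, h5⟩
    · exact ⟨x0, g3, by rw [h3]; exact hst⟩
    · exact ⟨y, (hdone h3).to_reflTransGen, by rw [h5]; rfl⟩

lemma partA_sound (G : CDGS T) (f : Mode) (D : ℕ → Prop)
    (hf : ∀ P m (y : SForm T), modeOK P f m y ↔ (¬ ∃ z, RStep P y z) ∧ D m)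
    {k : ℕ} {M0 : Multiset ℕ} (S' n : ℕ) (hS : ∀ i, ∀ r ∈ G.comp i, r.1 ≠ S')
    (e : LabA G k M0 ≃ Fin n) (w : List T) (hw : w ∈ (pgA G D S' n e).lang) :
    w ∈ G.lang f ∧ w ∈ (pgA G D S' n e).langB (M0.card + 1) := by
  obtain ⟨r₁, r₂, h⟩ := hw
  have h0 : InvA G f S' [Sum.inl S'] (e.symm r₁) := by
    rcases e.symm r₁ with _ | ⟨i, j, r, c⟩
    · rfl
    · exact Or.inl rfl
  have hb : ∀ (x : SForm T) (a : LabA G k M0), InvA G f S' x a → ntCount x ≤ M0.card + 1 := by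
    intro x a hI
    rw [ntCount_eq]
    rcases a with _ | ⟨i, j, r, c⟩
    · simp only [InvA] at hI
      subst hI; simp
    · rcases hI with rfl | hI
      · simp
      · rw [hI.1]
        exact (Multiset.card_le_card c.2).trans (Nat.le_succ _)
  have key : ∀ p : SForm T × Fin n,
      Relation.ReflTransGen (pgA G D S' n e).PStep ([Sum.inl S'], r₁) p →
      InvA G f S' p.1 (e.symm p.2) ∧
      Relation.ReflTransGen (fun p q => (pgA G D S' n e).PStep p q ∧ ntCount q.1 ≤ M0.card + 1)
        ([Sum.inl S'], r₁) p := by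
    intro p hp
    induction hp with
    | refl => exact ⟨h0, .refl⟩
    | tail _ hs ih =>
      have := invA_step G f D hf S' n hS e _ _ hs ih.1
      exact ⟨this, ih.2.tail ⟨hs, hb _ _ this⟩⟩
  obtain ⟨k1, k2⟩ := key _ h
  refine ⟨?_, r₁, r₂, by rw [ntCount_eq]; simp, k2⟩
  simp only at k1
  generalize e.symm r₂ = l2 at k1
  have hno : w.map Sum.inr ≠ ([Sum.inl S'] : SForm T) := by
    intro h
    have := congrArg nts h
    simp at this
  rcases l2 with _ | ⟨i, j, r, c⟩
  · exact absurd k1 hno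
  · rcases k1 with k1 | ⟨k1, -, -, k3⟩
    · exact absurd k1 hno
    · exact k3 (by rw [← k1]; simp)

def GoodA (G : CDGS T) (D : ℕ → Prop) {k : ℕ} {M0 : Multiset ℕ} (S' n : ℕ)
    (e : LabA G k M0 ≃ Fin n) (w : List T) (i : Fin G.deg) (j : ℕ) (x : SForm T) : Prop :=
  ∃ (j' : Fin k) (r : {r : Rule T // ∃ i, r ∈ G.comp i}) (c : {c : Multiset ℕ // c ≤ M0})
    (b : Fin n), j'.1 = j ∧ r.1 ∈ G.comp i ∧ c.1 = nts x ∧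
    Relation.ReflTransGen (pgA G D S' n e).PStep (x, e (some (i, j', r, c))) (w.map Sum.inr, b)

lemma good_step (G : CDGS T) (D : ℕ → Prop) {k : ℕ} {M0 : Multiset ℕ} (S' n : ℕ)
    (e : LabA G k M0 ≃ Fin n) (w : List T) (i i' : Fin G.deg) (j j' : ℕ) (x z : SForm T)
    (hj : j < k) (hx : nts x ≤ M0) (hs : RStep (G.comp i) x z)
    (hz : GoodA G D S' n e w i' j' z)
    (h : (i' = i ∧ j' = j + 1) ∨ (doneA G D i (j + 1) (nts z) ∧ j' = 0))
    (h2 : nts z = 0 → doneA G D i (j + 1) (nts z)) : GoodA G D S' n e w i j x := by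
  obtain ⟨jj, r', c', b, rfl, hr', hc', hd⟩ := hz
  obtain ⟨r, hr, u, v, hxe, hze⟩ := hs
  refine ⟨⟨j, hj⟩, ⟨r, i, hr⟩, ⟨nts x, hx⟩, b, rfl, hr, rfl, Relation.ReflTransGen.head ?_ hd⟩
  rw [pgA_step]
  simp only [Equiv.symm_apply_apply]
  refine ⟨u, v, hxe, hze, ?_⟩
  · simp only [succA]
    rw [hc']
    refine ⟨?_, hr', h, h2⟩
    rw [hxe, hze]
    simp only [nts_append, nts_cons_inl, ← Multiset.singleton_add]
    abel

lemma good_steps (G : CDGS T) (D : ℕ → Prop) {k : ℕ} (dom : Finset ℕ) (S' n : ℕ)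
    (e : LabA G k (k • dom.val) ≃ Fin n) (w : List T) (i i' : Fin G.deg) (m j : ℕ) (x y : SForm T)
    (hdom : ∀ r ∈ G.comp i, r.1 ∈ dom)
    (hj : j + (m + 1) ≤ k) (hs : StepsN (G.comp i) (m + 1) x y)
    (hd : doneA G D i (j + (m + 1)) (nts y)) (hy : nts y ≤ k • dom.val)
    (hg : GoodA G D S' n e w i' 0 y) : GoodA G D S' n e w i j x := by
  induction m generalizing x j with
  | zero =>
    have hx := bound_steps (by omega) hs hd.2 hdom hy
    obtain ⟨z, h1, rfl⟩ := hs
    exact good_step G D S' n e w i i' j 0 x z (by omega) hx h1 hg (Or.inr ⟨hd, rfl⟩) (fun _ => hd)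
  | succ m ih =>
    have hx := bound_steps (by omega) hs hd.2 hdom hy
    obtain ⟨z, h1, h2⟩ := hs
    have := ih (j + 1) z (by omega) h2 (by convert hd using 1; omega)
    refine good_step G D S' n e w i i j (j + 1) x z (by omega) hx h1 this (Or.inl ⟨rfl, rfl⟩) ?_
    intro h0
    obtain ⟨z', h3, -⟩ := h2
    obtain ⟨r, _, hr, _⟩ := rstep_nts h3
    rw [h0] at hr
    simp at hr

lemma partA_complete (G : CDGS T) (f : Mode) (D : ℕ → Prop) {k : ℕ} (hk : 1 ≤ k)
    (hf : ∀ P m (y : SForm T), modeOK P f m y ↔ (¬ ∃ z, RStep P y z) ∧ D m)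
    (hD : ∀ m, D m → m ≤ k) (dom : Finset ℕ) (S' n : ℕ)
    (hdom : ∀ i, ∀ r ∈ G.comp i, r.1 ∈ dom)
    (e : LabA G k (k • dom.val) ≃ Fin n) (w : List T) (hw : w ∈ G.lang f) :
    w ∈ (pgA G D S' n e).lang := by
  have key : ∀ x, Relation.ReflTransGen (G.ModeStep f) x (w.map Sum.inr) →
      nts x ≤ k • dom.val ∧ (x = w.map Sum.inr ∨ ∃ i, GoodA G D S' n e w i 0 x) := by
    intro x hx
    induction hx using Relation.ReflTransGen.head_induction_on with
    | refl => exact ⟨by simp, Or.inl rfl⟩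
    | head hs _ ih =>
      rename_i x y _
      obtain ⟨i, m, hst, hm⟩ := hs
      rw [hf, stuck_iff] at hm
      have hmk := hD m hm.2
      refine ⟨bound_steps hmk hst hm.1 (hdom i) ih.1, ?_⟩
      rcases m with _ | m
      · cases hst; exact ih.2
      right
      have hg : ∃ i', GoodA G D S' n e w i' 0 y := by
        rcases ih.2 with h | h
        · obtain ⟨z, ⟨r, hr, -⟩, -⟩ := hst
          exact ⟨i, ⟨0, hk⟩, ⟨r, i, hr⟩, ⟨nts y, ih.1⟩, e (some (i, ⟨0, hk⟩, ⟨r, i, hr⟩, ⟨nts y, ih.1⟩)),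
            rfl, hr, rfl, by simp only [← h]; exact .refl⟩
        · exact h
      obtain ⟨i', hg⟩ := hg
      exact ⟨i, good_steps G D dom S' n e w i i' m 0 x y (hdom i) (by omega) hst
        (by rw [zero_add]; exact ⟨hm.2, hm.1⟩) ih.1 hg⟩
  obtain ⟨hb, h | ⟨i, j, r, c, b, hj, hr, hc, hd⟩⟩ := key _ (Relation.TransGen.to_reflTransGen hw)
  · have := congrArg nts h
    simp at this
  · refine ⟨e none, b, Relation.ReflTransGen.head ?_ hd⟩
    change (pgA G D S' n e).PStep ([Sum.inl S'], _) _
    rw [pgA_step]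
    simp only [Equiv.symm_apply_apply]
    refine ⟨[], [], by simp [ruleA], by simp [ruleA], ?_⟩
    · simp only [succA]
      exact ⟨hj, hr, by rw [hc]; simp⟩

theorem partA (lf : Bool) (f : Mode) (D : ℕ → Prop) {k : ℕ} (hk : 1 ≤ k)
    (hf : ∀ P m (y : SForm T), modeOK P f m y ↔ (¬ ∃ z, RStep P y z) ∧ D m)
    (hD : ∀ m, D m → m ≤ k) : CDFamInf T lf f ⊆ PFamFin T lf true := by
  rintro L ⟨G, hlf, hL⟩
  let dom : Finset ℕ := Finset.univ.biUnion (fun i => ((G.comp i).map Prod.fst).toFinset)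
  have hdom : ∀ i, ∀ r ∈ G.comp i, r.1 ∈ dom := by
    intro i r hr
    simp only [dom, Finset.mem_biUnion, Finset.mem_univ, true_and, List.mem_toFinset, List.mem_map]
    exact ⟨i, r, hr, rfl⟩
  obtain ⟨S', hS'⟩ := Infinite.exists_notMem_finset dom
  have hS : ∀ i, ∀ r ∈ G.comp i, r.1 ≠ S' := fun i r hr h => hS' (h ▸ hdom i r hr)
  have := finite_LabA G k (k • dom.val)
  obtain ⟨n, ⟨e⟩⟩ := Finite.exists_equiv_fin (LabA G k (k • dom.val))
  have hs := partA_sound G f D hf S' n hS e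
  have heq : (pgA G D S' n e).lang = G.lang f := by
    ext w
    exact ⟨fun h => (hs w h).1, partA_complete G f D hk hf hD dom S' n hdom e w⟩
  refine ⟨_, Nat.le_add_left 1 (k • dom.val).card, pgA G D S' n e, ?_, by simp, by rw [heq]; exact hL,
    fun w h => (hs w h).2⟩
  intro h r
  simp only [pgA]
  rcases e.symm r with _ | ⟨i, j, r, c⟩
  · simp [ruleA]
  · obtain ⟨i0, hi⟩ := r.2
    exact hlf h i0 _ hi

end partA

/-! ### From bounded systems with distinct nonterminals to CD grammar systems -/

section partB
variable {N Q T : Type} [DecidableEq N]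

/-- Symbols of the CD system: a nonterminal with an optional mark. -/
abbrev Sy (N Q : Type) : Type := N × Option (Bool × Q)

def rel (enc : Sy N Q → ℕ) (g : N → Option (Bool × Q)) (X : List (N ⊕ T)) : SForm T :=
  X.map (Sum.map (fun A => enc (A, g A)) id)

def mk1 (A : N) (o : Bool × Q) : N → Option (Bool × Q) := fun B => if B = A then some o else none

def mk2 (A : N) (q : Q) (A' : N) (q' : Q) : N → Option (Bool × Q) :=
  fun B => if B = A then some (true, q) else if B = A' then some (false, q') else none

/-- The simulated machine. -/
def MStep (tr : Q → N → List (N ⊕ T) → Q → Prop) (p p' : List (N ⊕ T) × Q) : Prop :=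
  ∃ A Z U V, tr p.2 A Z p'.2 ∧ p.1 = U ++ Sum.inl A :: V ∧ p'.1 = U ++ Z ++ V

inductive Cs (enc : Sy N Q → ℕ) (occ : Q → Finset N) (tr : Q → N → List (N ⊕ T) → Q → Prop) :
    Sy N Q × SForm T × Set (Sy N Q) → Prop
  | recv (q : Q) (A : N) (Z : List (N ⊕ T)) (q' : Q) (A' : N) : tr q A Z q' → A' ∈ occ q → A' ≠ A →
      Cs enc occ tr ((A', none), [Sum.inl (enc (A', some (false, q')))],
        {s | (s.2 = none ∧ s.1 ≠ A') ∨ s = (A, some (true, q)) ∨ s = (A', some (false, q'))})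
  | fire (q : Q) (A : N) (Z : List (N ⊕ T)) (q' : Q) (A' : N) : tr q A Z q' →
      (A' ∈ occ q' ∨ occ q' = ∅) →
      Cs enc occ tr ((A, some (true, q)), rel enc (mk1 A' (false, q')) Z,
        {s | (s.2 = none ∧ s.1 ≠ A') ∨ s = (A', some (false, q'))})
  | acc (A : N) (q : Q) : A ∈ occ q →
      Cs enc occ tr ((A, some (false, q)), [Sum.inl (enc (A, some (true, q)))],
        {s | s.2 = none ∨ s = (A, some (true, q))})

section rel
variable (enc : Sy N Q → ℕ) (g g' : N → Option (Bool × Q))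

@[simp] lemma rel_append (X Y : List (N ⊕ T)) : rel enc g (X ++ Y) = rel enc g X ++ rel enc g Y := by
  simp [rel]

@[simp] lemma rel_cons_inl (A : N) (Y : List (N ⊕ T)) :
    rel enc g (Sum.inl A :: Y) = Sum.inl (enc (A, g A)) :: rel enc g Y := by
  simp [rel]

lemma nts_rel (X : List (N ⊕ T)) : nts (rel enc g X) = (nts X).map (fun A => enc (A, g A)) :=
  nts_map _ _

lemma rel_congr (X : List (N ⊕ T)) (h : ∀ B ∈ nts X, g B = g' B) : rel enc g X = rel enc g' X := by
  unfold rel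
  apply List.map_congr_left
  intro s hs
  cases s with
  | inl A => simp [h A (mem_nts.2 hs)]
  | inr a => rfl

lemma mem_nts_rel (henc : Function.Injective enc) (X : List (N ⊕ T)) (s : Sy N Q) :
    enc s ∈ nts (rel enc g X) ↔ s.1 ∈ nts X ∧ s.2 = g s.1 := by
  rw [nts_rel, Multiset.mem_map]
  constructor
  · rintro ⟨A, hA, h⟩
    have := henc h
    subst this
    exact ⟨hA, rfl⟩
  · rintro ⟨h1, h2⟩
    exact ⟨s.1, h1, by rw [← h2]⟩

lemma rel_split (henc : Function.Injective enc) (X : List (N ⊕ T)) (s : Sy N Q) (u v : SForm T)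
    (h : rel enc g X = u ++ Sum.inl (enc s) :: v) :
    ∃ U V, X = U ++ Sum.inl s.1 :: V ∧ g s.1 = s.2 ∧ u = rel enc g U ∧ v = rel enc g V := by
  unfold rel at h
  obtain ⟨U, V', rfl, hu, hv⟩ := List.map_eq_append_iff.1 h
  obtain ⟨a, V, rfl, ha, hv2⟩ := List.map_eq_cons_iff.1 hv
  cases a with
  | inr a => simp at ha
  | inl A =>
    simp only [Sum.map_inl, Sum.inl.injEq] at ha
    have := henc ha
    subst this
    exact ⟨U, V, rfl, rfl, hu.symm, hv2.symm⟩

lemma rel_nodup (henc : Function.Injective enc) (X : List (N ⊕ T)) (h : (nts X).Nodup) :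
    (nts (rel enc g X)).Nodup := by
  rw [nts_rel]
  refine Multiset.Nodup.map ?_ h
  intro A B hAB
  exact congrArg Prod.fst (henc hAB)

end rel

/-- The rules of one component. -/
noncomputable def compB [Finite N] [Finite Q] (enc : Sy N Q → ℕ)
    (κ : Sy N Q × SForm T × Set (Sy N Q)) : List (Rule T) :=
  (enc κ.1, [Sum.inl (enc κ.1)]) :: (enc κ.1, κ.2.1) ::
    ((Set.toFinite (κ.2.2)ᶜ).toFinset.toList.map (fun s => (enc s, [Sum.inl (enc s)])))

noncomputable def cdB [Finite N] [Finite Q] (enc : Sy N Q → ℕ)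
    {C : Sy N Q × SForm T × Set (Sy N Q) → Prop} (n : ℕ) (e : {κ // C κ} ≃ Fin n) (S : ℕ) :
    CDGS T where
  deg := n
  start := S
  comp i := compB enc (e.symm i).1

section sem
variable [Finite N] [Finite Q] (enc : Sy N Q → ℕ) (κ : Sy N Q × SForm T × Set (Sy N Q))

lemma mem_compB (r : Rule T) : r ∈ compB enc κ ↔ r = (enc κ.1, [Sum.inl (enc κ.1)]) ∨
    r = (enc κ.1, κ.2.1) ∨ ∃ s, s ∉ κ.2.2 ∧ r = (enc s, [Sum.inl (enc s)]) := by
  simp [compB, eq_comm]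

lemma rstep_compB {x y : SForm T} (h : RStep (compB enc κ) x y) : y = x ∨
    ∃ u v, x = u ++ Sum.inl (enc κ.1) :: v ∧ y = u ++ κ.2.1 ++ v := by
  obtain ⟨r, hr, u, v, rfl, rfl⟩ := h
  rcases (mem_compB _ _ _).1 hr with rfl | rfl | ⟨s, _, rfl⟩
  · left; simp
  · right; exact ⟨u, v, rfl, rfl⟩
  · left; simp

lemma stepsN_compB_id {x y : SForm T} (hx : enc κ.1 ∉ nts x) {m : ℕ}
    (h : StepsN (compB enc κ) m x y) : y = x := by
  induction m generalizing x with
  | zero => exact h.symm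
  | succ m ih =>
    obtain ⟨z, h1, h2⟩ := h
    rcases rstep_compB _ _ h1 with rfl | ⟨u, v, rfl, rfl⟩
    · exact ih hx h2
    · simp at hx

lemma stepsN_compB {x y : SForm T} (hx : (nts x).Nodup) (hr : enc κ.1 ∉ nts κ.2.1) {m : ℕ}
    (h : StepsN (compB enc κ) m x y) : y = x ∨
    ∃ u v, x = u ++ Sum.inl (enc κ.1) :: v ∧ y = u ++ κ.2.1 ++ v := by
  induction m generalizing x with
  | zero => exact Or.inl h.symm
  | succ m ih =>
    obtain ⟨z, h1, h2⟩ := h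
    rcases rstep_compB _ _ h1 with rfl | ⟨u, v, rfl, rfl⟩
    · exact ih hx h2
    · right
      refine ⟨u, v, rfl, stepsN_compB_id _ _ ?_ h2⟩
      simp only [nts_append, nts_cons_inl, Multiset.add_cons, Multiset.nodup_cons,
        Multiset.mem_add, not_or] at hx ⊢
      exact ⟨⟨hx.1.1, hr⟩, hx.1.2⟩

lemma stepsN_pad {u v : SForm T} (m : ℕ) :
    StepsN (compB enc κ) (m + 1) (u ++ Sum.inl (enc κ.1) :: v) (u ++ κ.2.1 ++ v) := by
  induction m with
  | zero => exact ⟨_, ⟨_, (mem_compB _ _ _).2 (Or.inr (Or.inl rfl)), u, v, rfl, rfl⟩, rfl⟩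
  | succ m ih =>
    exact ⟨u ++ Sum.inl (enc κ.1) :: v, ⟨_, (mem_compB _ _ _).2 (Or.inl rfl), u, v, rfl, by simp⟩, ih⟩

lemma stuck_compB (hκ : κ.1 ∉ κ.2.2) (y : SForm T) :
    (¬ ∃ z, RStep (compB enc κ) y z) ↔ ∀ s, enc s ∈ nts y → s ∈ κ.2.2 := by
  rw [stuck_iff]
  constructor
  · intro h s hs
    by_contra hc
    exact h _ ((mem_compB _ _ _).2 (Or.inr (Or.inr ⟨s, hc, rfl⟩))) hs
  · intro h r hr hm
    rcases (mem_compB _ _ _).1 hr with rfl | rfl | ⟨s, hs, rfl⟩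
    · exact hκ (h _ hm)
    · exact hκ (h _ hm)
    · exact hs (h _ hm)

end sem

lemma mk1_eq {A B : N} {o p : Bool × Q} : mk1 A o B = some p ↔ B = A ∧ p = o := by
  unfold mk1; split_ifs with h <;> simp [h, eq_comm]
lemma mk1_none {A B : N} {o : Bool × Q} : mk1 A o B = none ↔ B ≠ A := by
  unfold mk1; split_ifs with h <;> simp [h]

lemma Cs_prop {enc : Sy N Q → ℕ} (henc : Function.Injective enc) {occ : Q → Finset N}
    {tr : Q → N → List (N ⊕ T) → Q → Prop} {κ : Sy N Q × SForm T × Set (Sy N Q)}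
    (h : Cs enc occ tr κ) : κ.1 ∉ κ.2.2 ∧ ∀ s, enc s ∈ nts κ.2.1 → s ∈ κ.2.2 := by
  cases h with
  | recv q A Z q' A' h1 h2 h3 =>
    refine ⟨by simp, ?_⟩
    intro s hs
    simp only [nts_cons_inl, nts_nil, Multiset.cons_zero, Multiset.mem_singleton] at hs
    rw [henc hs]; simp
  | fire q A Z q' A' h1 h2 =>
    refine ⟨by simp, ?_⟩
    intro s hs
    rw [mem_nts_rel _ _ henc] at hs
    obtain ⟨a, o⟩ := s
    have ho : o = mk1 A' (false, q') a := hs.2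
    subst ho
    by_cases ha : a = A'
    · right; simp [mk1, ha]
    · left; simp [mk1, ha]
  | acc A q h =>
    refine ⟨by simp, ?_⟩
    intro s hs
    simp only [nts_cons_inl, nts_nil, Multiset.cons_zero, Multiset.mem_singleton] at hs
    rw [henc hs]; simp

section main
variable [Finite N] [Finite Q] {enc : Sy N Q → ℕ}
  {occ : Q → Finset N} {tr : Q → N → List (N ⊕ T) → Q → Prop}
  {f : Mode} {D : ℕ → Prop} {l : ℕ} {n : ℕ} (e : {κ // Cs enc occ tr κ} ≃ Fin n) (S0 : ℕ)

lemma ms_sound (henc : Function.Injective enc)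
    (hf : ∀ P m (y : SForm T), modeOK P f m y ↔ (¬ ∃ z, RStep P y z) ∧ D m)
    {x y : SForm T} (hx : (nts x).Nodup) (h : (cdB enc n e S0).ModeStep f x y) :
    y = x ∨ ∃ κ, Cs enc occ tr κ ∧ ∃ u v, x = u ++ Sum.inl (enc κ.1) :: v ∧
      y = u ++ κ.2.1 ++ v ∧ ∀ s, enc s ∈ nts y → s ∈ κ.2.2 := by
  obtain ⟨i, m, h1, h2⟩ := h
  rw [hf] at h2
  change StepsN (compB enc (e.symm i).1) m x y at h1
  have h3 : ¬ ∃ z, RStep (compB enc (e.symm i).1) y z := h2.1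
  have hp := Cs_prop henc (e.symm i).2
  rcases stepsN_compB enc (e.symm i).1 hx (fun hh => hp.1 (hp.2 _ hh)) h1 with h | ⟨u, v, h4, h5⟩
  · exact Or.inl h
  · exact Or.inr ⟨_, (e.symm i).2, u, v, h4, h5, (stuck_compB _ _ hp.1 _).1 h3⟩

lemma ms_complete (henc : Function.Injective enc)
    (hf : ∀ P m (y : SForm T), modeOK P f m y ↔ (¬ ∃ z, RStep P y z) ∧ D m)
    (hl : 1 ≤ l) (hD : D l) {κ : Sy N Q × SForm T × Set (Sy N Q)}
    (hκ : Cs enc occ tr κ) (u v : SForm T) (h : ∀ s, enc s ∈ nts (u ++ v) → s ∈ κ.2.2) :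
    (cdB enc n e S0).ModeStep f (u ++ Sum.inl (enc κ.1) :: v) (u ++ κ.2.1 ++ v) := by
  have hp := Cs_prop henc hκ
  obtain ⟨m, rfl⟩ : ∃ m, l = m + 1 := ⟨l - 1, by omega⟩
  have hc : (cdB enc n e S0).comp (e ⟨κ, hκ⟩) = compB enc κ := by simp [cdB]
  refine ⟨e ⟨κ, hκ⟩, m + 1, ?_, ?_⟩
  · rw [hc]; exact stepsN_pad _ _ _
  · rw [hf, hc, stuck_compB _ _ hp.1]
    refine ⟨?_, hD⟩
    intro s hs
    simp only [nts_append, Multiset.mem_add] at hs h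
    rcases hs with (hs | hs) | hs
    · exact h s (Or.inl hs)
    · exact hp.2 s hs
    · exact h s (Or.inr hs)

/-- Invariant of the simulation. -/
def InvB (enc : Sy N Q → ℕ) (occ : Q → Finset N) (tr : Q → N → List (N ⊕ T) → Q → Prop)
    (p0 : List (N ⊕ T) × Q) (y : SForm T) : Prop :=
  ∃ X q, Relation.ReflTransGen (MStep tr) p0 (X, q) ∧ nts X = (occ q).val ∧
    ((∃ A, A ∈ occ q ∧ y = rel enc (mk1 A (true, q)) X) ∨
     (∃ A, (A ∈ occ q ∨ occ q = ∅) ∧ y = rel enc (mk1 A (false, q)) X) ∨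
     (∃ A A' q', A ∈ occ q ∧ A' ∈ occ q ∧ A' ≠ A ∧ y = rel enc (mk2 A q A' q') X))


lemma mem_of_split {g : N → Option (Bool × Q)} {U V : List (N ⊕ T)} {B C : N} (rhs : SForm T)
    (hC : C ∈ nts (U ++ Sum.inl B :: V)) (hne : C ≠ B) :
    enc (C, g C) ∈ nts (rel enc g U ++ rhs ++ rel enc g V) := by
  simp only [nts_append, nts_cons_inl, Multiset.mem_add, Multiset.mem_cons, nts_rel] at hC ⊢
  rcases hC with h | h | h
  · exact Or.inl (Or.inl (Multiset.mem_map_of_mem _ h))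
  · exact absurd h hne
  · exact Or.inr (Multiset.mem_map_of_mem _ h)

lemma split_ne {U V : List (N ⊕ T)} {B : N} (h : (nts (U ++ Sum.inl B :: V)).Nodup) :
    (∀ C ∈ nts U, C ≠ B) ∧ (∀ C ∈ nts V, C ≠ B) := by
  simp only [nts_append, nts_cons_inl, Multiset.add_cons, Multiset.nodup_cons,
        Multiset.mem_add, not_or] at h
  exact ⟨fun C hC hh => h.1.1 (hh ▸ hC), fun C hC hh => h.1.2 (hh ▸ hC)⟩

lemma nts_next {occ : Q → Finset N} {q q' : Q} {A : N} {U Z V : List (N ⊕ T)}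
    (heq : (occ q').val + {A} = (occ q).val + nts Z)
    (h : nts (U ++ Sum.inl A :: V) = (occ q).val) : nts (U ++ Z ++ V) = (occ q').val := by
  rw [← h] at heq
  have : nts (U ++ Z ++ V) + {A} = (occ q').val + {A} := by
    rw [heq]
    simp only [nts_append, nts_cons_inl, ← Multiset.singleton_add]
    abel
  exact add_right_cancel this

lemma rel_splice {g g' : N → Option (Bool × Q)} {U Z V : List (N ⊕ T)} (rhs : SForm T)
    (hr : rhs = rel enc g' Z) (hU : ∀ C ∈ nts U, g C = g' C) (hV : ∀ C ∈ nts V, g C = g' C) :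
    rel enc g U ++ rhs ++ rel enc g V = rel enc g' (U ++ Z ++ V) := by
  rw [hr, rel_append, rel_append, rel_congr enc g g' U hU, rel_congr enc g g' V hV]

lemma fire_sound {g : N → Option (Bool × Q)} {U Z V : List (N ⊕ T)} {A A' : N} {q' : Q}
    (hnd : (nts (U ++ Sum.inl A :: V)).Nodup)
    (h : ∀ s, enc s ∈ nts (rel enc g U ++ rel enc (mk1 A' (false, q')) Z ++ rel enc g V) →
      (s.2 = none ∧ s.1 ≠ A') ∨ s = (A', some (false, q'))) :
    rel enc g U ++ rel enc (mk1 A' (false, q')) Z ++ rel enc g V =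
      rel enc (mk1 A' (false, q')) (U ++ Z ++ V) := by
  have key : ∀ C ∈ nts (U ++ Sum.inl A :: V), C ≠ A → g C = mk1 A' (false, q') C := by
    intro C hC hne
    rcases h _ (mem_of_split _ hC hne) with ⟨h1, h2⟩ | h1
    · simp only at h1 h2
      rw [h1]; exact (mk1_none.2 h2).symm
    · simp only [Prod.mk.injEq] at h1
      rw [h1.2]; exact (mk1_eq.2 ⟨h1.1, rfl⟩).symm
  obtain ⟨n1, n2⟩ := split_ne hnd
  refine rel_splice _ rfl (fun C hC => key C ?_ (n1 C hC)) (fun C hC => key C ?_ (n2 C hC))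
  · simp [hC]
  · simp [hC]

lemma invB_step (henc : Function.Injective enc)
    (hf : ∀ P m (y : SForm T), modeOK P f m y ↔ (¬ ∃ z, RStep P y z) ∧ D m)
    (heq : ∀ q A Z q', tr q A Z q' → (occ q').val + {A} = (occ q).val + nts Z)
    (p0 : List (N ⊕ T) × Q) {y y2 : SForm T} (hI : InvB enc occ tr p0 y)
    (h : (cdB enc n e S0).ModeStep f y y2) : InvB enc occ tr p0 y2 := by
  have hI' := hI
  obtain ⟨X, q0, hR, hX, hcase⟩ := hI
  have hXn : (nts X).Nodup := by rw [hX]; exact (occ q0).nodup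
  have hg : ∃ g, y = rel enc g X := by
    rcases hcase with ⟨A, -, h⟩ | ⟨A, -, h⟩ | ⟨A, A', q', -, -, -, h⟩ <;> exact ⟨_, h⟩
  have hyn : (nts y).Nodup := by
    obtain ⟨g, rfl⟩ := hg
    exact rel_nodup enc g henc X hXn
  rcases ms_sound e S0 henc hf hyn h with rfl | ⟨κ, hκ, u, v, h1, h2, h3⟩
  · exact hI'
  have hmem : ∀ {C}, C ∈ occ q0 → C ∈ nts X := by
    intro C hC; rw [hX]; exact hC
  cases hκ with
  | recv q A Z q' A' t1 t2 t3 =>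
    simp only at h1 h2 h3
    rcases hcase with ⟨A0, hA0, rfl⟩ | ⟨A0, hA0, rfl⟩ | ⟨A0, A0', q0', hA0, hA0', hne, rfl⟩ <;>
      obtain ⟨U, V, rfl, hgB, rfl, rfl⟩ := rel_split enc _ henc X _ u v h1 <;> simp only at hgB hmem <;>
      subst h2
    · have hne := mk1_none.1 hgB
      have := h3 _ (mem_of_split _ (hmem hA0) hne.symm)
      have hg0 : mk1 A0 (true, q0) A0 = some (true, q0) := by simp [mk1]
      rw [hg0] at this
      simp at this
      obtain ⟨rfl, rfl⟩ := this
      refine ⟨_, _, hR, hX, Or.inr (Or.inr ⟨A0, A', q', hA0, t2, t3, ?_⟩)⟩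
      obtain ⟨n1, n2⟩ := split_ne hXn
      have : U ++ Sum.inl A' :: V = U ++ [Sum.inl A'] ++ V := by simp
      rw [this]
      refine rel_splice _ ?_ ?_ ?_
      · simp [rel, mk2, t3]
      · intro C hC; simp [mk1, mk2, n1 C hC]
      · intro C hC; simp [mk1, mk2, n2 C hC]
    · exfalso
      have hne := mk1_none.1 hgB
      have hA0 : A0 ∈ occ q0 := by
        rcases hA0 with h | h
        · exact h
        · rw [h] at hX; simp at hX
      have := h3 _ (mem_of_split _ (hmem hA0) hne.symm)
      simp [mk1, hne.symm] at this
    · exfalso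
      have hne' : A0' ≠ A' := by
        rintro rfl
        simp [mk2, hne] at hgB
      have := h3 _ (mem_of_split _ (hmem hA0') hne')
      simp [mk2, hne, hne'] at this
  | fire q A Z q' A' t1 t2 =>
    simp only at h1 h2 h3
    have fin : ∀ g, y = rel enc g X → q = q0 → InvB enc occ tr p0 y2 := by
      rintro g rfl rfl
      obtain ⟨U, V, rfl, hgB, rfl, rfl⟩ := rel_split enc _ henc X _ u v h1
      subst h2
      refine ⟨U ++ Z ++ V, q', hR.tail ⟨A, Z, U, V, t1, rfl, rfl⟩, nts_next (heq _ _ _ _ t1) hX,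
        Or.inr (Or.inl ⟨A', t2, fire_sound hXn h3⟩)⟩
    rcases hcase with ⟨A0, hA0, hy⟩ | ⟨A0, hA0, hy⟩ | ⟨A0, A0', q0', hA0, hA0', hne, hy⟩ <;>
      refine fin _ hy ?_ <;> rw [hy] at h1 <;>
      obtain ⟨U, V, rfl, hgB, rfl, rfl⟩ := rel_split enc _ henc X _ u v h1 <;> simp only at hgB
    · have := (mk1_eq.1 hgB).2
      simpa using this
    · have := (mk1_eq.1 hgB).2
      simp at this
    · unfold mk2 at hgB
      split_ifs at hgB <;> simp at hgB
      exact hgB.symm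
  | acc A q t1 =>
    simp only at h1 h2 h3
    rcases hcase with ⟨A0, hA0, rfl⟩ | ⟨A0, hA0, rfl⟩ | ⟨A0, A0', q0', hA0, hA0', hne, rfl⟩ <;>
      obtain ⟨U, V, rfl, hgB, rfl, rfl⟩ := rel_split enc _ henc X _ u v h1 <;> simp only at hgB hmem <;>
      subst h2
    · have := (mk1_eq.1 hgB).2
      simp at this
    · obtain ⟨rfl, h5⟩ := mk1_eq.1 hgB
      simp at h5
      subst h5
      refine ⟨_, _, hR, hX, Or.inl ⟨A, t1, ?_⟩⟩
      obtain ⟨n1, n2⟩ := split_ne hXn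
      have : U ++ Sum.inl A :: V = U ++ [Sum.inl A] ++ V := by simp
      rw [this]
      refine rel_splice _ ?_ ?_ ?_
      · simp [rel, mk1]
      · intro C hC; simp [mk1, n1 C hC]
      · intro C hC; simp [mk1, n2 C hC]
    · exfalso
      have hne' : A0 ≠ A := by
        rintro rfl
        simp [mk2] at hgB
      have := h3 _ (mem_of_split _ (hmem hA0) hne')
      simp [mk2, hne'] at this

lemma ms_rel (henc : Function.Injective enc)
    (hf : ∀ P m (y : SForm T), modeOK P f m y ↔ (¬ ∃ z, RStep P y z) ∧ D m)
    (hl : 1 ≤ l) (hD : D l) {B : N} {g g' : N → Option (Bool × Q)} {U Z V : List (N ⊕ T)}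
    {o : Option (Bool × Q)} {rhs : SForm T} {al : Set (Sy N Q)}
    (hκ : Cs enc occ tr ((B, o), rhs, al)) (hB : g B = o) (hr : rhs = rel enc g' Z)
    (h : ∀ C ∈ nts (U ++ V), g C = g' C ∧ (C, g C) ∈ al) :
    (cdB enc n e S0).ModeStep f (rel enc g (U ++ Sum.inl B :: V)) (rel enc g' (U ++ Z ++ V)) := by
  have := ms_complete e S0 henc hf hl hD hκ (rel enc g U) (rel enc g V) ?_
  · simp only at this
    rw [rel_splice rhs hr (fun C hC => (h C (by simp [hC])).1) (fun C hC => (h C (by simp [hC])).1)] at this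
    rw [rel_append, rel_cons_inl, hB]
    exact this
  · intro s hs
    rw [← rel_append, mem_nts_rel enc g henc] at hs
    obtain ⟨a, b⟩ := s
    have hb : b = g a := hs.2
    subst hb
    exact (h a hs.1).2

lemma acc_step (henc : Function.Injective enc)
    (hf : ∀ P m (y : SForm T), modeOK P f m y ↔ (¬ ∃ z, RStep P y z) ∧ D m)
    (hl : 1 ≤ l) (hD : D l) {X : List (N ⊕ T)} {q : Q} {A : N} (hX : nts X = (occ q).val)
    (hA : A ∈ occ q) :
    (cdB enc n e S0).ModeStep f (rel enc (mk1 A (false, q)) X) (rel enc (mk1 A (true, q)) X) := by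
  have hXn : (nts X).Nodup := by rw [hX]; exact (occ q).nodup
  obtain ⟨U, V, rfl⟩ := exists_split (x := X) (A := A) (by rw [hX]; exact hA)
  obtain ⟨n1, n2⟩ := split_ne hXn
  have e1 : U ++ Sum.inl A :: V = U ++ [Sum.inl A] ++ V := by simp
  conv => arg 4; rw [e1]
  refine ms_rel e S0 henc hf hl hD (Cs.acc A q hA) (by simp [mk1]) (by simp [rel, mk1]) ?_
  intro C hC
  have hne : C ≠ A := by
    simp only [nts_append, Multiset.mem_add] at hC
    exact hC.elim (n1 C) (n2 C)
  simp [mk1, hne]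

lemma fire2 (henc : Function.Injective enc)
    (hf : ∀ P m (y : SForm T), modeOK P f m y ↔ (¬ ∃ z, RStep P y z) ∧ D m)
    (hl : 1 ≤ l) (hD : D l)
    (heq : ∀ q A Z q', tr q A Z q' → (occ q').val + {A} = (occ q).val + nts Z)
    {U Z V : List (N ⊕ T)} {q q' : Q} {A A' : N}
    (hX : nts (U ++ Sum.inl A :: V) = (occ q).val) (ht : tr q A Z q') (hA' : A' ∈ occ q)
    (hne : A' ≠ A) : A' ∈ occ q' ∧
    Relation.ReflTransGen ((cdB enc n e S0).ModeStep f)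
      (rel enc (mk1 A (true, q)) (U ++ Sum.inl A :: V))
      (rel enc (mk1 A' (true, q')) (U ++ Z ++ V)) := by
  have hXn : (nts (U ++ Sum.inl A :: V)).Nodup := by rw [hX]; exact (occ q).nodup
  have hX' := nts_next (heq _ _ _ _ ht) hX
  have hA2 : A' ∈ occ q' := by
    have h1 : A' ∈ (occ q').val + {A} := by
      rw [heq _ _ _ _ ht]; exact Multiset.mem_add.2 (Or.inl hA')
    rcases Multiset.mem_add.1 h1 with h | h
    · exact h
    · exact absurd (Multiset.mem_singleton.1 h) hne
  refine ⟨hA2, ?_⟩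
  refine Relation.ReflTransGen.tail (b := rel enc (mk1 A' (false, q')) (U ++ Z ++ V)) ?_
    (acc_step e S0 henc hf hl hD hX' hA2)
  refine Relation.ReflTransGen.tail (b := rel enc (mk2 A q A' q') (U ++ Sum.inl A :: V)) ?_ ?_
  · apply Relation.ReflTransGen.single
    obtain ⟨U1, V1, hs⟩ := exists_split (x := U ++ Sum.inl A :: V) (A := A') (by rw [hX]; exact hA')
    rw [hs] at hXn ⊢
    obtain ⟨n1, n2⟩ := split_ne hXn
    have e1 : U1 ++ Sum.inl A' :: V1 = U1 ++ [Sum.inl A'] ++ V1 := by simp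
    conv => arg 4; rw [e1]
    refine ms_rel e S0 henc hf hl hD (Cs.recv q A Z q' A' ht hA' hne) (by simp [mk1, hne])
      (by simp [rel, mk2, hne]) ?_
    intro C hC
    have hC' : C ≠ A' := by
      simp only [nts_append, Multiset.mem_add] at hC
      exact hC.elim (n1 C) (n2 C)
    by_cases hCA : C = A <;> simp [mk1, mk2, hC', hCA]
  · obtain ⟨n1, n2⟩ := split_ne hXn
    refine ms_rel e S0 henc hf hl hD (Cs.fire q A Z q' A' ht (Or.inl hA2)) (by simp [mk2]) rfl ?_
    intro C hC
    have hC' : C ≠ A := by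
      simp only [nts_append, Multiset.mem_add] at hC
      exact hC.elim (n1 C) (n2 C)
    by_cases hCA : C = A' <;> simp [mk1, mk2, hC', hCA, hne]

lemma fire1 (henc : Function.Injective enc)
    (hf : ∀ P m (y : SForm T), modeOK P f m y ↔ (¬ ∃ z, RStep P y z) ∧ D m)
    (hl : 1 ≤ l) (hD : D l)
    (heq : ∀ q A Z q', tr q A Z q' → (occ q').val + {A} = (occ q).val + nts Z)
    {U Z V : List (N ⊕ T)} {q q' : Q} {A A' : N}
    (hX : nts (U ++ Sum.inl A :: V) = (occ q).val) (ht : tr q A Z q')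
    (hA' : A' ∈ nts Z ∨ occ q' = ∅) :
    (cdB enc n e S0).ModeStep f
      (rel enc (mk1 A (true, q)) (U ++ Sum.inl A :: V))
      (rel enc (mk1 A' (false, q')) (U ++ Z ++ V)) := by
  have hXn : (nts (U ++ Sum.inl A :: V)).Nodup := by rw [hX]; exact (occ q).nodup
  have hX' := nts_next (heq _ _ _ _ ht) hX
  have hXn' : (nts (U ++ Z ++ V)).Nodup := by rw [hX']; exact (occ q').nodup
  obtain ⟨n1, n2⟩ := split_ne hXn
  have hA2 : A' ∈ occ q' ∨ occ q' = ∅ := by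
    rcases hA' with h | h
    · left
      have : A' ∈ nts (U ++ Z ++ V) := by simp [h]
      rw [hX'] at this
      exact this
    · exact Or.inr h
  refine ms_rel e S0 henc hf hl hD (Cs.fire q A Z q' A' ht hA2) (by simp [mk1]) rfl ?_
  intro C hC
  have hC1 : C ≠ A := by
    simp only [nts_append, Multiset.mem_add] at hC
    exact hC.elim (n1 C) (n2 C)
  have hC2 : C ≠ A' := by
    rintro rfl
    rcases hA' with h | h
    · have hp : nts (U ++ Z ++ V) = nts Z + nts (U ++ V) := by
        simp only [nts_append]; abel
      rw [hp, Multiset.nodup_add] at hXn'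
      exact Multiset.disjoint_left.1 hXn'.2.2 h hC
    · rw [h] at hX'
      simp at hX' hC
      rcases hC with hC | hC
      · rw [hX'.1] at hC; simp at hC
      · rw [hX'.2.2] at hC; simp at hC
  simp [mk1, hC1, hC2]

lemma simB (henc : Function.Injective enc)
    (hf : ∀ P m (y : SForm T), modeOK P f m y ↔ (¬ ∃ z, RStep P y z) ∧ D m)
    (hl : 1 ≤ l) (hD : D l)
    (heq : ∀ q A Z q', tr q A Z q' → (occ q').val + {A} = (occ q).val + nts Z)
    (hid : ∀ q, ∀ A ∈ occ q, tr q A [Sum.inl A] q) (S : N) (q0 : Q) (hq0 : occ q0 = {S})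
    (p : List (N ⊕ T) × Q)
    (h : Relation.ReflTransGen (MStep tr) ([Sum.inl S], q0) p) :
    nts p.1 = (occ p.2).val ∧ ∃ A, (A ∈ occ p.2 ∨ occ p.2 = ∅) ∧
      Relation.ReflTransGen ((cdB enc n e S0).ModeStep f) [Sum.inl (enc (S, some (true, q0)))]
        (rel enc (mk1 A (true, p.2)) p.1) := by
  induction h with
  | refl => exact ⟨by simp [hq0], S, by simp [hq0], by simp [rel, mk1]; exact .refl⟩
  | @tail p p' _ hs ih =>
    obtain ⟨X, q⟩ := p
    obtain ⟨X', q'⟩ := p'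
    obtain ⟨A, Z, U, V, ht, hx, hx'⟩ := hs
    simp only at ht hx hx' ih ⊢
    subst hx hx'
    obtain ⟨hX, A0, hA0, hR⟩ := ih
    have hX' := nts_next (heq _ _ _ _ ht) hX
    refine ⟨hX', ?_⟩
    have hAq : A ∈ occ q := by
      change A ∈ (occ q).val
      rw [← hX]; simp
    have hA0 : A0 ∈ occ q := by
      rcases hA0 with h | h
      · exact h
      · rw [h] at hAq; simp at hAq
    have hR2 : Relation.ReflTransGen ((cdB enc n e S0).ModeStep f)
        [Sum.inl (enc (S, some (true, q0)))]
        (rel enc (mk1 A (true, q)) (U ++ Sum.inl A :: V)) := by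
      by_cases h0 : A = A0
      · rw [h0] at hR ⊢; exact hR
      · refine hR.trans ?_
        obtain ⟨U1, V1, hs⟩ := exists_split (x := U ++ Sum.inl A :: V) (A := A0)
          (by rw [hX]; exact hA0)
        rw [hs] at hX ⊢
        have := (fire2 e S0 henc hf hl hD heq hX (hid q A0 hA0) hAq h0).2
        simpa using this
    by_cases hZ : ∃ A', A' ∈ nts Z
    · obtain ⟨A', hA'⟩ := hZ
      have hA2 : A' ∈ occ q' := by
        change A' ∈ (occ q').val
        rw [← hX']; simp [hA']
      exact ⟨A', Or.inl hA2, (hR2.tail (fire1 e S0 henc hf hl hD heq hX ht (Or.inl hA'))).tail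
        (acc_step e S0 henc hf hl hD hX' hA2)⟩
    · by_cases hO : ∃ A' ∈ occ q, A' ≠ A
      · obtain ⟨A', h1, h2⟩ := hO
        have := fire2 e S0 henc hf hl hD heq hX ht h1 h2
        exact ⟨A', Or.inl this.1, hR2.trans this.2⟩
      · have he : occ q' = ∅ := by
          rw [Finset.eq_empty_iff_forall_notMem]
          intro B hB
          have h1 : B ∈ nts (U ++ Z ++ V) := by rw [hX']; exact hB
          have hXn : (nts (U ++ Sum.inl A :: V)).Nodup := by rw [hX]; exact (occ q).nodup
          obtain ⟨n1, n2⟩ := split_ne hXn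
          have h2 : ∀ C, C ∈ nts (U ++ Sum.inl A :: V) → C = A := by
            intro C hC
            by_contra hne
            rw [hX] at hC
            exact hO ⟨C, hC, hne⟩
          simp only [nts_append, Multiset.mem_add] at h1
          rcases h1 with (h1 | h1) | h1
          · exact n1 B h1 (h2 B (by simp [h1]))
          · exact hZ ⟨B, h1⟩
          · exact n2 B h1 (h2 B (by simp [h1]))
        refine ⟨A, Or.inr he, ?_⟩
        have := hR2.tail (fire1 (A' := A) e S0 henc hf hl hD heq hX ht (Or.inr he))
        rw [rel_congr enc (mk1 A (true, q')) (mk1 A (false, q'))]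
        · exact this
        · intro B hB
          rw [hX', he] at hB
          simp at hB

lemma langB_eq (henc : Function.Injective enc)
    (hf : ∀ P m (y : SForm T), modeOK P f m y ↔ (¬ ∃ z, RStep P y z) ∧ D m)
    (hl : 1 ≤ l) (hD : D l)
    (heq : ∀ q A Z q', tr q A Z q' → (occ q').val + {A} = (occ q).val + nts Z)
    (hid : ∀ q, ∀ A ∈ occ q, tr q A [Sum.inl A] q) (S : N) (q0 : Q) (hq0 : occ q0 = {S})
    (w : List T) :
    w ∈ (cdB enc n e (enc (S, some (true, q0)))).lang f ↔
      ∃ q, Relation.ReflTransGen (MStep tr) ([Sum.inl S], q0) (w.map Sum.inr, q) := by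
  constructor
  · intro h
    have key : ∀ y, Relation.ReflTransGen ((cdB enc n e (enc (S, some (true, q0)))).ModeStep f)
        [Sum.inl (enc (S, some (true, q0)))] y → InvB enc occ tr ([Sum.inl S], q0) y := by
      intro y hy
      induction hy with
      | refl => exact ⟨_, _, .refl, by simp [hq0], Or.inl ⟨S, by simp [hq0], by simp [rel, mk1]⟩⟩
      | tail _ hs ih => exact invB_step e _ henc hf heq _ ih hs
    obtain ⟨X, q, hR, hX, hc⟩ := key _ (Relation.TransGen.to_reflTransGen h)
    have hg : ∃ g, w.map Sum.inr = rel enc g X := by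
      rcases hc with ⟨A, -, h⟩ | ⟨A, -, h⟩ | ⟨A, A', q', -, -, -, h⟩ <;> exact ⟨_, h⟩
    obtain ⟨g, hg⟩ := hg
    have h0 : nts X = 0 := by
      have := congrArg nts hg
      rw [nts_rel, nts_map_inr] at this
      exact Multiset.map_eq_zero.1 this.symm
    obtain ⟨w', rfl⟩ := nts_eq_zero h0
    have : w = w' := by
      simp only [rel, List.map_map] at hg
      have hi : Function.Injective (Sum.inr : T → ℕ ⊕ T) := Sum.inr_injective
      exact List.map_injective_iff.2 hi hg
    subst this
    exact ⟨q, hR⟩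
  · rintro ⟨q, hR⟩
    obtain ⟨hX, A, hA, h⟩ := simB e (enc (S, some (true, q0))) henc hf hl hD heq hid S q0 hq0 _ hR
    have h2 : rel enc (mk1 A (true, q)) (w.map (Sum.inr : T → N ⊕ T)) = w.map Sum.inr := by
      simp [rel]
    simp only at h
    rw [h2] at h
    rcases Relation.reflTransGen_iff_eq_or_transGen.1 h with h | h
    · have := congrArg nts h
      simp at this
    · exact h

end main
end partB

/-! ### From finite-index programmed grammars to bounded systems -/

section partC
variable {T : Type}

abbrev NC (K : Finset ℕ) (m : ℕ) : Type := {A // A ∈ K} × Fin m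

def fg {K : Finset ℕ} {m : ℕ} (X : List (NC K m ⊕ T)) : SForm T :=
  X.map (Sum.map (fun A => A.1.1) id)

section fg
variable {K : Finset ℕ} {m : ℕ}

@[simp] lemma fg_nil : fg ([] : List (NC K m ⊕ T)) = [] := rfl
@[simp] lemma fg_append (X Y : List (NC K m ⊕ T)) : fg (X ++ Y) = fg X ++ fg Y := by
  simp [fg]
@[simp] lemma fg_inl (A : NC K m) (Y : List (NC K m ⊕ T)) :
    fg (Sum.inl A :: Y) = Sum.inl A.1.1 :: fg Y := rfl
@[simp] lemma fg_inr (a : T) (Y : List (NC K m ⊕ T)) :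
    fg (Sum.inr a :: Y) = Sum.inr a :: fg Y := rfl
@[simp] lemma fg_map_inr (w : List T) :
    fg (w.map Sum.inr : List (NC K m ⊕ T)) = w.map Sum.inr := by
  simp [fg]
lemma nts_fg (X : List (NC K m ⊕ T)) : nts (fg X) = (nts X).map (fun A => A.1.1) := nts_map _ _

lemma fg_eq_map_inr {X : List (NC K m ⊕ T)} {w : List T} (h : fg X = w.map Sum.inr) :
    X = w.map Sum.inr := by
  have h0 : nts X = 0 := by
    have := congrArg nts h
    rw [nts_fg, nts_map_inr] at this
    exact Multiset.map_eq_zero.1 this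
  obtain ⟨w', rfl⟩ := nts_eq_zero h0
  rw [fg_map_inr] at h
  have hi : Function.Injective (Sum.inr : T → ℕ ⊕ T) := Sum.inr_injective
  rw [List.map_injective_iff.2 hi h]

lemma fg_split {X : List (NC K m ⊕ T)} {A : ℕ} {u v : SForm T}
    (h : fg X = u ++ Sum.inl A :: v) :
    ∃ U B V, X = U ++ Sum.inl B :: V ∧ B.1.1 = A ∧ fg U = u ∧ fg V = v := by
  unfold fg at h
  obtain ⟨U, V', rfl, hu, hv⟩ := List.map_eq_append_iff.1 h
  obtain ⟨a, V, rfl, ha, hv2⟩ := List.map_eq_cons_iff.1 hv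
  cases a with
  | inr a => simp at ha
  | inl B =>
    simp only [Sum.map_inl, Sum.inl.injEq] at ha
    exact ⟨U, B, V, rfl, ha, hu, hv2⟩

lemma fg_finite (z : SForm T) : {Z : List (NC K m ⊕ T) | fg Z = z}.Finite := by
  induction z with
  | nil =>
    refine (Set.finite_singleton []).subset ?_
    intro Z hZ
    exact List.map_eq_nil_iff.1 hZ
  | cons s z ih =>
    have hs : {a : NC K m ⊕ T | Sum.map (fun A : NC K m => A.1.1) id a = s}.Finite := by
      cases s with
      | inl A =>
        refine (Set.finite_range (Sum.inl : NC K m → NC K m ⊕ T)).subset ?_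
        rintro (a | a) h
        · exact ⟨a, rfl⟩
        · simp at h
      | inr b =>
        refine (Set.finite_singleton (Sum.inr b)).subset ?_
        rintro (a | a) h
        · simp at h
        · simpa using h
    refine (Set.Finite.image2 List.cons hs ih).subset ?_
    intro Z hZ
    obtain ⟨a, V, rfl, ha, hv⟩ := List.map_eq_cons_iff.1 hZ
    exact ⟨a, ha, V, hv, rfl⟩

lemma annot (z : SForm T) (hz : ∀ A ∈ nts z, A ∈ K) (c : Finset (NC K m))
    (hc : c.card + (nts z).card ≤ m) :
    ∃ Z : List (NC K m ⊕ T), fg Z = z ∧ (c.val + nts Z).Nodup := by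
  induction z generalizing c with
  | nil => exact ⟨[], rfl, by simpa using c.nodup⟩
  | cons s z ih =>
    cases s with
    | inr a =>
      obtain ⟨Z, h1, h2⟩ := ih (by simpa using hz) c (by simpa using hc)
      exact ⟨Sum.inr a :: Z, by simp [h1], by simpa using h2⟩
    | inl A =>
      simp only [nts_cons_inl, Multiset.mem_cons, forall_eq_or_imp, Multiset.card_cons] at hz hc
      have : ∃ i : Fin m, i ∉ c.image Prod.snd := by
        by_contra! h
        have h1 : (Finset.univ : Finset (Fin m)) ⊆ c.image Prod.snd := fun i _ => h i
        have h2 := Finset.card_le_card h1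
        have h3 := Finset.card_image_le (s := c) (f := Prod.snd)
        simp at h2
        omega
      obtain ⟨i, hi⟩ := this
      have hB : ((⟨A, hz.1⟩, i) : NC K m) ∉ c := fun h => hi (Finset.mem_image_of_mem _ h)
      obtain ⟨Z, h1, h2⟩ := ih hz.2 (insert (⟨A, hz.1⟩, i) c) (by
        rw [Finset.card_insert_of_notMem hB]; omega)
      refine ⟨Sum.inl (⟨A, hz.1⟩, i) :: Z, by simp [h1], ?_⟩
      rw [Finset.insert_val_of_notMem hB] at h2
      simpa using h2

end fg

abbrev QC (G : PG T) (K : Finset ℕ) (m : ℕ) : Type := Finset (NC K m) × Option (Fin G.nLab)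

def trC (G : PG T) (K : Finset ℕ) (m : ℕ) (q : QC G K m) (A : NC K m) (Z : List (NC K m ⊕ T))
    (q' : QC G K m) : Prop :=
  A ∈ q.1 ∧ q'.1.val + {A} = q.1.val + nts Z ∧
  ((∃ r r', q.2 = some r ∧ q'.2 = some r' ∧ (G.rule r).1 = A.1.1 ∧ fg Z = (G.rule r).2 ∧
      r' ∈ G.succ r) ∨
   (Z = [Sum.inl A] ∧ ∃ r r', q.2 = some r ∧ q'.2 = some r' ∧
      (∀ B ∈ q.1, B.1.1 ≠ (G.rule r).1) ∧ r' ∈ G.fail r) ∨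
   (Z = [Sum.inl A] ∧ q' = q) ∨
   (Z = [Sum.inl A] ∧ q.2 = none ∧ ∃ r, q'.2 = some r))

section C
variable (G : PG T) (K : Finset ℕ) (m : ℕ)

lemma trC_Z {q A Z q'} (h : trC G K m q A Z q') :
    (∃ r, fg Z = (G.rule r).2) ∨ Z = [Sum.inl A] := by
  rcases h.2.2 with ⟨r, _, _, _, _, h, _⟩ | h | h | h
  · exact Or.inl ⟨r, h⟩
  · exact Or.inr h.1
  · exact Or.inr h.1
  · exact Or.inr h.1

lemma csC_finite (enc : Sy (NC K m) (QC G K m) → ℕ) :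
    Finite {κ // Cs enc (fun q : QC G K m => q.1) (trC G K m) κ} := by
  classical
  let F : Set (List (NC K m ⊕ T)) :=
    (⋃ r, {Z | fg Z = (G.rule r).2}) ∪ Set.range (fun A => [Sum.inl A])
  have hF : F.Finite := by
    refine Set.Finite.union (Set.finite_iUnion fun r => fg_finite _) (Set.finite_range _)
  let R : Set (SForm T) := Set.range (fun s => [Sum.inl (enc s)]) ∪
    ⋃ (a : NC K m × Bool × QC G K m), (rel enc (mk1 a.1 a.2)) '' F
  have hR : R.Finite :=
    (Set.finite_range _).union (Set.finite_iUnion fun a => hF.image _)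
  have : {κ | Cs enc (fun q : QC G K m => q.1) (trC G K m) κ}.Finite := by
    refine (Set.Finite.prod (Set.finite_univ) (hR.prod Set.finite_univ)).subset ?_
    intro κ hκ
    refine ⟨trivial, ?_, trivial⟩
    cases hκ with
    | recv q A Z q' A' h1 h2 h3 => exact Or.inl ⟨_, rfl⟩
    | acc A q h => exact Or.inl ⟨_, rfl⟩
    | fire q A Z q' A' h1 h2 =>
      refine Or.inr (Set.mem_iUnion.2 ⟨(A', false, q'), Z, ?_, rfl⟩)
      rcases trC_Z G K m h1 with ⟨r, h⟩ | h
      · exact Or.inl (Set.mem_iUnion.2 ⟨r, h⟩)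
      · exact Or.inr ⟨A, h.symm⟩
  exact this.to_subtype

lemma lamC (enc : Sy (NC K m) (QC G K m) → ℕ) (n : ℕ)
    (e : {κ // Cs enc (fun q : QC G K m => q.1) (trC G K m) κ} ≃ Fin n) (S0 : ℕ)
    (h : G.LamFree) : (cdB enc n e S0).LamFree := by
  intro i r hr
  have hκ := (e.symm i).2
  have hr : r ∈ compB enc (e.symm i).1 := hr
  generalize (e.symm i).1 = κ at hκ hr
  rcases (mem_compB _ _ _).1 hr with rfl | rfl | ⟨s, hs, rfl⟩
  · simp
  · cases hκ with
    | recv q A Z q' A' h1 h2 h3 => simp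
    | acc A q h => simp
    | fire q A Z q' A' h1 h2 =>
      simp only [rel, ne_eq, List.map_eq_nil_iff]
      rintro rfl
      rcases trC_Z G K m h1 with ⟨r, h'⟩ | h'
      · exact h r h'.symm
      · simp at h'
  · simp

lemma nts_nextC {U V Z : List (NC K m ⊕ T)} {A : NC K m} {c c' : Finset (NC K m)}
    (h : c'.val + {A} = c.val + nts Z) (hX : nts (U ++ Sum.inl A :: V) = c.val) :
    nts (U ++ Z ++ V) = c'.val := by
  rw [← hX] at h
  apply add_right_cancel (b := ({A} : Multiset (NC K m)))
  rw [h]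
  simp only [nts_append, nts_cons_inl, ← Multiset.singleton_add]
  abel

lemma soundC (S : NC K m) (hS : S.1.1 = G.start) (p : List (NC K m ⊕ T) × QC G K m)
    (h : Relation.ReflTransGen (MStep (trC G K m)) ([Sum.inl S], ({S}, none)) p) :
    nts p.1 = p.2.1.val ∧ ((p.2.2 = none ∧ fg p.1 = [Sum.inl G.start]) ∨
      ∃ r₁ r, p.2.2 = some r ∧
        Relation.ReflTransGen G.PStep ([Sum.inl G.start], r₁) (fg p.1, r)) := by
  induction h with
  | refl => exact ⟨by simp, Or.inl ⟨rfl, by simp [hS]⟩⟩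
  | @tail p p' _ hs ih =>
    obtain ⟨X, c, o⟩ := p
    obtain ⟨X', c', o'⟩ := p'
    obtain ⟨A, Z, U, V, ⟨hA, he, ht⟩, hx, hx'⟩ := hs
    simp only at hA he ht hx hx' ih ⊢
    subst hx hx'
    obtain ⟨hX, ih⟩ := ih
    refine ⟨nts_nextC K m he hX, ?_⟩
    rcases ht with ⟨r, r', rfl, rfl, h1, h2, h3⟩ | ⟨rfl, r, r', rfl, rfl, h1, h2⟩ |
      ⟨rfl, h1⟩ | ⟨rfl, rfl, r, rfl⟩
    · right
      rcases ih with ⟨h, -⟩ | ⟨r₁, r₂, h4, h5⟩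
      · simp at h
      · simp only [Option.some.injEq] at h4
        subst h4
        refine ⟨r₁, r', rfl, h5.tail (Or.inl ⟨fg U, fg V, ?_, ?_, h3⟩)⟩
        · simp [h1]
        · simp [h2]
    · right
      rcases ih with ⟨h, -⟩ | ⟨r₁, r₂, h4, h5⟩
      · simp at h
      · simp only [Option.some.injEq] at h4
        subst h4
        refine ⟨r₁, r', rfl, h5.tail (Or.inr ⟨?_, by simp, h2⟩)⟩
        simp only
        rw [← mem_nts, nts_fg, hX]
        intro hm
        obtain ⟨B, hB, hB2⟩ := Multiset.mem_map.1 hm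
        exact h1 B hB hB2
    · simp only [Prod.mk.injEq] at h1
      obtain ⟨rfl, rfl⟩ := h1
      simpa using ih
    · right
      rcases ih with ⟨-, h⟩ | ⟨r₁, r₂, h4, h5⟩
      · refine ⟨r, r, rfl, ?_⟩
        have : fg (U ++ [Sum.inl A] ++ V) = fg (U ++ Sum.inl A :: V) := by simp
        rw [this, h]
      · simp at h4

lemma compC (hK : ∀ r, ∀ A ∈ nts (G.rule r).2, A ∈ K) (S : NC K m) (hS : S.1.1 = G.start)
    (r₁ : Fin G.nLab) (p : SForm T × Fin G.nLab)
    (h : Relation.ReflTransGen (fun p q => G.PStep p q ∧ ntCount q.1 ≤ m)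
      ([Sum.inl G.start], r₁) p) :
    ∃ X q, Relation.ReflTransGen (MStep (trC G K m)) ([Sum.inl S], ({S}, none)) (X, q) ∧
      nts X = q.1.val ∧ fg X = p.1 ∧ (q.2 = some p.2 ∨ nts X = 0) := by
  induction h with
  | refl =>
    refine ⟨[Sum.inl S], ({S}, some r₁), .single ⟨S, [Sum.inl S], [], [], ⟨by simp, by simp, ?_⟩,
      by simp, by simp⟩, by simp, by simp [hS], Or.inl rfl⟩
    exact Or.inr (Or.inr (Or.inr ⟨rfl, rfl, r₁, rfl⟩))
  | @tail p p' _ hs ih =>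
    obtain ⟨X, ⟨c, o⟩, hR, hX, hf, ho⟩ := ih
    obtain ⟨x, r⟩ := p
    obtain ⟨x', r'⟩ := p'
    obtain ⟨hs, hb⟩ := hs
    simp only at hX hf ho hb ⊢
    subst hf
    by_cases h0 : nts X = 0
    · rcases hs with ⟨u, v, h1, h2, h3⟩ | ⟨h1, h2, h3⟩
      · exfalso
        have := congrArg nts h1
        simp [nts_fg, h0] at this
      · exact ⟨X, (c, o), hR, hX, h2.symm, Or.inr h0⟩
    have ho := ho.resolve_right h0
    subst ho
    rcases hs with ⟨u, v, h1, h2, h3⟩ | ⟨h1, h2, h3⟩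
    · simp only at h1 h2 h3
      subst h2
      obtain ⟨U, B, V, rfl, hB, rfl, rfl⟩ := fg_split h1
      have hBc : B ∈ c := by
        change B ∈ c.val
        rw [← hX]; simp
      have hcar := congrArg Multiset.card hX
      rw [ntCount_eq] at hb
      simp [nts_fg] at hb hcar
      obtain ⟨Z, hZ, hZn⟩ := annot (G.rule r).2 (hK r) (c.erase B) (by
        rw [Finset.card_erase_of_mem hBc]
        omega)
      have hceq : (c.erase B).val + {B} = c.val := by
        rw [Finset.erase_val, add_comm, Multiset.singleton_add]
        exact Multiset.cons_erase hBc
      have he : (c.erase B).val + nts Z + {B} = c.val + nts Z := by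
        rw [← hceq]; abel
      refine ⟨U ++ Z ++ V, (⟨_, hZn⟩, some r'), hR.tail ⟨B, Z, U, V, ⟨hBc, he, ?_⟩, rfl, rfl⟩, ?_,
        by simp [hZ], Or.inl rfl⟩
      · exact Or.inl ⟨r, r', rfl, rfl, hB.symm, hZ, h3⟩
      · exact nts_nextC K m (c' := ⟨_, hZn⟩) he hX
    · simp only at h1 h2 h3
      subst h2
      obtain ⟨B, hB⟩ := Multiset.exists_mem_of_ne_zero h0
      obtain ⟨U, V, rfl⟩ := exists_split hB
      have hBc : B ∈ c := by
        change B ∈ c.val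
        rw [← hX]; simp
      refine ⟨_, (c, some r'), hR.tail ⟨B, [Sum.inl B], U, V, ⟨hBc, by simp, ?_⟩, rfl, ?_⟩, hX, rfl,
        Or.inl rfl⟩
      · refine Or.inr (Or.inl ⟨rfl, r, r', rfl, rfl, ?_, h3⟩)
        intro C hC hCe
        apply h1
        rw [← mem_nts, nts_fg, hX, ← hCe]
        exact Multiset.mem_map_of_mem _ hC
      · simp

end C

theorem partB (lf : Bool) (f : Mode) (D : ℕ → Prop) {l : ℕ} (hl : 1 ≤ l) (hD : D l)
    (hf : ∀ P m (y : SForm T), modeOK P f m y ↔ (¬ ∃ z, RStep P y z) ∧ D m) :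
    PFamFin T lf true ⊆ CDFamInf T lf f := by
  classical
  rintro L ⟨m, hm, G, hlf, -, hE, hB⟩
  let K : Finset ℕ := insert G.start (Finset.univ.biUnion fun r => (nts (G.rule r).2).toFinset)
  have hK : ∀ r, ∀ A ∈ nts (G.rule r).2, A ∈ K := by
    intro r A hA
    refine Finset.mem_insert_of_mem (Finset.mem_biUnion.2 ⟨r, Finset.mem_univ _, ?_⟩)
    exact Multiset.mem_toFinset.2 hA
  let S : NC K m := (⟨G.start, Finset.mem_insert_self _ _⟩, ⟨0, hm⟩)
  obtain ⟨enc, henc⟩ := exists_injective_nat (Sy (NC K m) (QC G K m))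
  have := csC_finite G K m enc
  obtain ⟨n, ⟨e⟩⟩ := Finite.exists_equiv_fin
    {κ // Cs enc (fun q : QC G K m => q.1) (trC G K m) κ}
  refine ⟨cdB enc n e (enc (S, some (true, ({S}, none)))), fun h => lamC _ _ _ _ _ _ _ (hlf h), ?_⟩
  have : (cdB enc n e (enc (S, some (true, ({S}, none))))).lang f = G.lang := by
    ext w
    rw [langB_eq e henc hf hl hD (fun q A Z q' h => h.2.1)
      (fun q A hA => ⟨hA, by simp, Or.inr (Or.inr (Or.inl ⟨rfl, rfl⟩))⟩) S ({S}, none) rfl w]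
    constructor
    · rintro ⟨q, hq⟩
      obtain ⟨-, ⟨-, h⟩ | ⟨r₁, r, -, h⟩⟩ := soundC G K m S rfl _ hq
      · have := congrArg nts h
        simp at this
      · simp only [fg_map_inr] at h
        exact ⟨r₁, r, h⟩
    · intro hw
      obtain ⟨r₁, r₂, -, h⟩ := hB hw
      obtain ⟨X, q, hR, -, hX, -⟩ := compC G K m hK S rfl r₁ _ h
      rw [fg_eq_map_inr hX] at hR
      exact ⟨q, hR⟩
  rw [this]
  exact hE

end partC

/-- For every ℓ ∈ ℕ (positive) and Δ ∈ {≤, =},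
L(CD_∞, CF[−λ], (t∧Δℓ)) = L(CD_∞, CF[−λ], (t∧Δ1))
  = ⋃_{k∈ℕ} L(CD_∞, CF[−λ], (t∧Δk)) = L_fin(P, CF[−λ], ac),
both with and without erasing rules. -/
theorem stmt14 (lf : Bool) (l : ℕ) (hl : 1 ≤ l) (d : ℕ → Mode)
    (hd : d = Mode.le ∨ d = Mode.eq) :
    CDFamInf ℕ lf (Mode.conj Mode.t (d l)) = CDFamInf ℕ lf (Mode.conj Mode.t (d 1)) ∧
    CDFamInf ℕ lf (Mode.conj Mode.t (d 1)) =
      { L | ∃ k : ℕ, 1 ≤ k ∧ L ∈ CDFamInf ℕ lf (Mode.conj Mode.t (d k)) } ∧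
    CDFamInf ℕ lf (Mode.conj Mode.t (d l)) = PFamFin ℕ lf true := by
  have key : ∀ k, 1 ≤ k → CDFamInf ℕ lf (Mode.conj Mode.t (d k)) = PFamFin ℕ lf true := by
    intro k hk
    rcases hd with rfl | rfl
    · exact Set.Subset.antisymm
        (partA lf _ (fun m => m ≤ k) hk (fun P m y => Iff.rfl) (fun m h => h))
        (partB lf _ (fun m => m ≤ k) hk le_rfl (fun P m y => Iff.rfl))
    · exact Set.Subset.antisymm
        (partA lf _ (fun m => m = k) hk (fun P m y => Iff.rfl) (fun m h => h.le))
        (partB lf _ (fun m => m = k) hk rfl (fun P m y => Iff.rfl))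
  refine ⟨by rw [key l hl, key 1 le_rfl], ?_, key l hl⟩
  ext L
  constructor
  · intro h
    exact ⟨1, le_rfl, h⟩
  · rintro ⟨k, hk, h⟩
    rw [key k hk] at h
    rw [key 1 le_rfl]
    exact h

end CDHybrid
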